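/- Let Q be a loop with the automorphic inverse property and let α : Q → Q be any map. Then α is an endomorphism of Q with J∘α central (a J-central endomorphism) if and only if the map α̂ : x ↦ x+α(x) is an endomorphism of Q whose image is contained in Z(Q). Moreover, in that case {x ∈ Q : α(x) = 0} = {x ∈ Q : α̂(x) = x}. -/

import Mathlib

/-- A loop: a quasigroup with a two-sided neutral element. -/
structure Loop (Q : Type) where
  add : Q → Q → Q
  zero : Q
  addLeftBij : ∀ x, Function.Bijective fun y => add x y
  addRightBij : ∀ x, Function.Bijective fun y => add y x
  zero_add : ∀ x, add zero x = x
  add_zero : ∀ x, add x zero = x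

namespace Loop

/-- The center of a loop: elements commuting and associating with everything. -/
def center {Q : Type} (L : Loop Q) : Set Q :=
  {z | (∀ x, L.add z x = L.add x z) ∧
       (∀ x y, L.add z (L.add x y) = L.add (L.add z x) y) ∧
       (∀ x y, L.add x (L.add z y) = L.add (L.add x z) y) ∧
       (∀ x y, L.add x (L.add y z) = L.add (L.add x y) z)}

/-- A map `α` is central if `Z(Q) + α(x) = Z(Q) + x` for every `x`. -/
def IsCentral {Q : Type} (L : Loop Q) (α : Q → Q) : Prop :=
  ∀ x, (fun z => L.add z (α x)) '' L.center = (fun z => L.add z x) '' L.center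

/-- Automorphism of a loop: a bijective map respecting the operation. -/
def IsAut {Q : Type} (L : Loop Q) (f : Q → Q) : Prop :=
  Function.Bijective f ∧ ∀ x y, f (L.add x y) = L.add (f x) (f y)

/-- `neg` provides two-sided inverses for the loop. -/
def IsTwoSidedInv {Q : Type} (L : Loop Q) (neg : Q → Q) : Prop :=
  ∀ x, L.add x (neg x) = L.zero ∧ L.add (neg x) x = L.zero

/-- Commutative Moufang loop: commutative and satisfying the Moufang identity. -/
def IsCommMoufang {Q : Type} (L : Loop Q) : Prop :=
  (∀ x y, L.add x y = L.add y x) ∧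
  (∀ x y z, L.add x (L.add y (L.add x z)) = L.add (L.add (L.add x y) x) z)

end Loop

/-!
If `z = x + α x` is central, then `x = z + (-α x)`, so `x` and `-α x` lie in the same coset of the
center; this is what centrality of `J ∘ α` means. Given this, collecting the central summands of
`x + y` and using the automorphic inverse property yields
`(x + y) + (α x + α y) = (x + α x) + (y + α y)`. Cancelling `x + y` on the left, `α` preserves the
sum `x + y` if and only if `id + α` does.
-/

namespace Loop

variable {Q : Type} (L : Loop Q)

/-- Endomorphisms of a loop, as a predicate on maps. Applied to an inversion map it is the
automorphic inverse property. -/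
def IsEnd (f : Q → Q) : Prop :=
  ∀ x y, f (L.add x y) = L.add (f x) (f y)

/-- The map `neg` sends each element to its left inverse, which need not be a right inverse. -/
def IsLeftInv (neg : Q → Q) : Prop :=
  ∀ x, L.add (neg x) x = L.zero

/-- The map `α̂ = id + α` associated with a self-map `α` of a loop. -/
def hat (α : Q → Q) (x : Q) : Q :=
  L.add x (α x)

variable {L} {a b w x y z : Q} {f neg α : Q → Q}

protected theorem add_right_inj : L.add x a = L.add x b ↔ a = b :=
  (L.addLeftBij x).injective.eq_iff

protected theorem add_left_inj : L.add a x = L.add b x ↔ a = b :=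
  (L.addRightBij x).injective.eq_iff

protected theorem add_eq_left : L.add x a = x ↔ a = L.zero := by
  rw [← L.add_right_inj (x := x) (b := L.zero), L.add_zero]

-- Equivalently, left translation by `z` is right translation by `z` and commutes with all
-- translations; in this form closure under inverses is a cancellation.
theorem mem_center_iff :
    z ∈ L.center ↔
      (∀ x, L.add z x = L.add x z) ∧
      (∀ x y, L.add z (L.add x y) = L.add (L.add z x) y) ∧
      (∀ x y, L.add z (L.add x y) = L.add x (L.add z y)) := by
  constructor
  · rintro ⟨comm, assoc_left, assoc_mid, -⟩
    exact ⟨comm, assoc_left, fun x y => by rw [assoc_left, comm, assoc_mid]⟩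
  · rintro ⟨comm, assoc, left_comm⟩
    refine ⟨comm, assoc, fun x y => ?_, fun x y => ?_⟩
    · rw [← left_comm, assoc, comm]
    · rw [← comm y, ← left_comm, comm]

theorem zero_mem_center : L.zero ∈ L.center := by
  simp only [mem_center_iff, L.zero_add, L.add_zero, implies_true, and_self]

theorem add_mem_center (hz : z ∈ L.center) (hw : w ∈ L.center) : L.add z w ∈ L.center := by
  obtain ⟨-, z_assoc, z_left_comm⟩ := mem_center_iff.1 hz
  obtain ⟨w_comm, w_assoc, w_left_comm⟩ := mem_center_iff.1 hw
  refine mem_center_iff.2 ⟨fun x => ?_, fun x y => ?_, fun x y => ?_⟩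
  · rw [← z_assoc, w_comm, z_left_comm]
  · rw [← z_assoc, w_assoc, z_assoc, z_assoc]
  · rw [← z_assoc, w_left_comm, z_left_comm, z_assoc]

theorem mem_center_of_add_eq_zero (hz : z ∈ L.center) (hzw : L.add z w = L.zero) :
    w ∈ L.center := by
  obtain ⟨-, assoc, left_comm⟩ := mem_center_iff.1 hz
  have cancel (x : Q) : L.add z (L.add w x) = x := by rw [assoc, hzw, L.zero_add]
  refine mem_center_iff.2 ⟨fun x => ?_, fun x y => ?_, fun x y => ?_⟩ <;>
    rw [← L.add_right_inj (x := z), cancel]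
  · rw [left_comm, hzw, L.add_zero]
  · rw [assoc, cancel]
  · rw [left_comm, cancel]

theorem add_add_add_comm_of_left_mem_center (hz : z ∈ L.center) (hw : w ∈ L.center) (a b : Q) :
    L.add (L.add z a) (L.add w b) = L.add (L.add z w) (L.add a b) := by
  obtain ⟨-, z_assoc, -⟩ := mem_center_iff.1 hz
  obtain ⟨-, -, w_left_comm⟩ := mem_center_iff.1 hw
  rw [← z_assoc, ← w_left_comm, z_assoc]

theorem image_add_center_add_left (hz : z ∈ L.center) (x : Q) :
    (fun w => L.add w (L.add z x)) '' L.center = (fun w => L.add w x) '' L.center := by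
  obtain ⟨z', hz'⟩ : ∃ z', L.add z z' = L.zero := (L.addLeftBij z).surjective L.zero
  have z'_mem : z' ∈ L.center := mem_center_of_add_eq_zero hz hz'
  ext t
  constructor
  · rintro ⟨w, hw, rfl⟩
    exact ⟨L.add w z, add_mem_center hw hz, (hw.2.1 z x).symm⟩
  · rintro ⟨w, hw, rfl⟩
    refine ⟨L.add w z', add_mem_center hw z'_mem, ?_⟩
    calc L.add (L.add w z') (L.add z x)
        = L.add w (L.add z' (L.add z x)) := (hw.2.1 _ _).symm
      _ = L.add w x := by rw [z'_mem.2.1, ← hz.1, hz', L.zero_add]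

theorem isCentral_iff : L.IsCentral f ↔ ∀ x, ∃ z ∈ L.center, L.add z (f x) = x := by
  refine forall_congr' fun x => ⟨fun h => ?_, ?_⟩
  · have x_mem : x ∈ (fun z => L.add z x) '' L.center :=
      ⟨L.zero, zero_mem_center, L.zero_add x⟩
    rwa [← h] at x_mem
  · rintro ⟨z, hz, hzx⟩
    rw [← image_add_center_add_left hz (f x), hzx]

theorem IsLeftInv.add_neg_eq_iff (hneg : L.IsLeftInv neg) (hz : z ∈ L.center) :
    L.add z (neg a) = x ↔ L.add x a = z := by
  rw [← L.add_left_inj (x := a), ← hz.2.1, hneg, L.add_zero, eq_comm]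

theorem IsLeftInv.isCentral_comp_iff (hneg : L.IsLeftInv neg) :
    L.IsCentral (neg ∘ α) ↔ ∀ x, L.hat α x ∈ L.center := by
  refine isCentral_iff.trans (forall_congr' fun x => ⟨?_, fun hx => ?_⟩)
  · rintro ⟨z, hz, hzx⟩
    rwa [hat, (hneg.add_neg_eq_iff hz).1 hzx]
  · exact ⟨L.hat α x, hx, (hneg.add_neg_eq_iff hx).2 rfl⟩

theorem IsLeftInv.add_add_add_comm_of_add_mem_center (hneg : L.IsLeftInv neg) (haip : L.IsEnd neg)
    (hx : L.add x a ∈ L.center) (hy : L.add y b ∈ L.center) :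
    L.add (L.add x y) (L.add a b) = L.add (L.add x a) (L.add y b) := by
  rw [← hneg.add_neg_eq_iff (add_mem_center hx hy)]
  calc L.add (L.add (L.add x a) (L.add y b)) (neg (L.add a b))
      = L.add (L.add (L.add x a) (neg a)) (L.add (L.add y b) (neg b)) := by
        rw [haip, add_add_add_comm_of_left_mem_center hx hy]
    _ = L.add x y := by
        rw [(hneg.add_neg_eq_iff hx).2 rfl, (hneg.add_neg_eq_iff hy).2 rfl]

theorem IsLeftInv.isEnd_hat_iff (hneg : L.IsLeftInv neg) (haip : L.IsEnd neg)
    (hα : ∀ x, L.hat α x ∈ L.center) : L.IsEnd (L.hat α) ↔ L.IsEnd α := by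
  refine forall₂_congr fun x y => ?_
  calc L.hat α (L.add x y) = L.add (L.hat α x) (L.hat α y)
      ↔ L.add (L.add x y) (α (L.add x y)) = L.add (L.add x y) (L.add (α x) (α y)) := by
        rw [hneg.add_add_add_comm_of_add_mem_center haip (hα x) (hα y)]; rfl
    _ ↔ α (L.add x y) = L.add (α x) (α y) := L.add_right_inj

end Loop

theorem stmt_general {Q : Type} (L : Loop Q) {neg : Q → Q} (hneg : L.IsLeftInv neg)
    (haip : L.IsEnd neg) (α : Q → Q) :
    (L.IsEnd α ∧ L.IsCentral (neg ∘ α) ↔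
      L.IsEnd (L.hat α) ∧ ∀ x, L.hat α x ∈ L.center) ∧
    {x | α x = L.zero} = {x | L.hat α x = x} := by
  constructor
  · rw [hneg.isCentral_comp_iff]
    exact and_congr_left fun hα => (hneg.isEnd_hat_iff haip hα).symm
  · ext x
    exact L.add_eq_left.symm

open Loop in
/-- In a loop with the automorphic inverse property, `α` is a J-central
endomorphism iff `α̂ = id + α` is an endomorphism into the center; moreover the
kernel of `α` is the fixed-point set of `α̂`. -/
theorem stmt {Q : Type} (L : Loop Q) (neg : Q → Q) (hneg : L.IsTwoSidedInv neg)
    (haip : ∀ x y, neg (L.add x y) = L.add (neg x) (neg y))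
    (α : Q → Q) :
    (((∀ x y, α (L.add x y) = L.add (α x) (α y)) ∧
        L.IsCentral (fun x => neg (α x))) ↔
      ((∀ x y, L.add (L.add x y) (α (L.add x y)) =
          L.add (L.add x (α x)) (L.add y (α y))) ∧
       (∀ x, L.add x (α x) ∈ L.center))) ∧
    (((∀ x y, α (L.add x y) = L.add (α x) (α y)) ∧
        L.IsCentral (fun x => neg (α x))) →
      {x | α x = L.zero} = {x | L.add x (α x) = x}) := by
  obtain ⟨central_iff, ker_eq⟩ := stmt_general L (fun x => (hneg x).2) haip α
  exact ⟨central_iff, fun _ => ker_eq⟩
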